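/- The map ℚ × (∏_p ℤ_p) → ℚ ⊗_ℤ (∏_p ℤ_p) sending (q, x) to q ⊗ 1 − 1 ⊗ x is surjective: every element of ℚ ⊗_ℤ (∏_p ℤ_p) can be written as q ⊗ 1 + 1 ⊗ x for some q ∈ ℚ and x ∈ ∏_p ℤ_p. -/

import Mathlib

/-!
Localizing the unit map `ℤ → A := ∏_p ℤ_p` at the nonzero integers gives `ℚ → ℚ ⊗ A`. An element of
`ℚ ⊗ A` is a fraction `m / s` with `m : A`, and a decomposition `m = n + s y` with `n : ℤ`, `y : A`
turns it into `n / s + y`, so it suffices that `ℤ → A / sA` is surjective for every nonzero `s`.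
This property is multiplicative in `s`, and for a prime `s = p` only the factor `ℤ_p` matters, since
`p` is invertible in all the others; there it says that the residue field of `ℤ_p` is `𝔽_p`.
-/

open TensorProduct

noncomputable section

/-- The product of the `p`-adic integers over all primes `p`. -/
abbrev ProdPadicInt : Type :=
  ∀ p : {p : ℕ // p.Prime}, @PadicInt p.1 ⟨p.2⟩

section

variable {R N M : Type*} [Semiring R] [AddCommMonoid N] [Module R N] [AddCommMonoid M] [Module R M]

/-- The scalars `s` for which the map `N → M ⧸ sM` induced by `f : N → M` is surjective. They are
bundled as a submonoid in order to be compared with the denominators of a localization. -/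
def surjectiveModuli (f : N →ₗ[R] M) : Submonoid R where
  carrier := {s | ∀ m, ∃ n y, f n + s • y = m}
  one_mem' m := ⟨0, m, by simp⟩
  mul_mem' {s t} hs ht m := by
    obtain ⟨n, y, rfl⟩ := hs m
    obtain ⟨k, z, rfl⟩ := ht y
    exact ⟨n + s • k, z, by simp only [map_add, map_smul, smul_add, mul_smul, add_assoc]⟩

theorem mem_surjectiveModuli {f : N →ₗ[R] M} {s : R} :
    s ∈ surjectiveModuli f ↔ ∀ m, ∃ n y, f n + s • y = m :=
  Iff.rfl

theorem mem_surjectiveModuli_of_isUnit (f : N →ₗ[R] M) {s : R} (hs : IsUnit s) :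
    s ∈ surjectiveModuli f :=
  mem_surjectiveModuli.mpr fun m => ⟨0, (↑hs.unit⁻¹ : R) • m, by simp [smul_smul]⟩

end

theorem mem_surjectiveModuli_pi {R N ι : Type*} {M : ι → Type*} [Semiring R] [AddCommMonoid N]
    [Module R N] [∀ i, AddCommGroup (M i)] [∀ i, Module R (M i)] {f : ∀ i, N →ₗ[R] M i} {s : R}
    (j : ι) (hj : s ∈ surjectiveModuli (f j))
    (hs : ∀ i ≠ j, Function.Surjective (s • · : M i → M i)) :
    s ∈ surjectiveModuli (LinearMap.pi f) := by
  refine mem_surjectiveModuli.mpr fun m => ?_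
  obtain ⟨n, z, hz⟩ := mem_surjectiveModuli.mp hj (m j)
  have hn (i : ι) : ∃ y, s • y = m i - f i n := by
    obtain rfl | hi := eq_or_ne i j
    · exact ⟨z, eq_sub_of_add_eq' hz⟩
    · exact hs i hi _
  choose y hy using hn
  exact ⟨n, y, funext fun i => add_eq_of_eq_sub' (hy i)⟩

theorem nonZeroDivisors_le_surjectiveModuli {R N M : Type*} [CommSemiring R] [Nontrivial R]
    [UniqueFactorizationMonoid R] [AddCommMonoid N] [Module R N] [AddCommMonoid M] [Module R M]
    {f : N →ₗ[R] M} (hf : ∀ q : R, Prime q → q ∈ surjectiveModuli f) :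
    nonZeroDivisors R ≤ surjectiveModuli f := by
  intro s hs
  induction s using UniqueFactorizationMonoid.induction_on_prime with
  | h₁ => exact absurd rfl (nonZeroDivisors.ne_zero hs)
  | h₂ u hu => exact mem_surjectiveModuli_of_isUnit f hu
  | h₃ s q _ hq ih => exact mul_mem (hf q hq) (ih (mul_mem_nonZeroDivisors.mp hs).2)

theorem surjective_coprod_of_le_surjectiveModuli {R N M N' M' : Type*} [CommSemiring R]
    [AddCommMonoid N] [Module R N] [AddCommMonoid M] [Module R M]
    [AddCommMonoid N'] [Module R N'] [AddCommMonoid M'] [Module R M']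
    (S : Submonoid R) (i : N →ₗ[R] N') [IsLocalizedModule S i]
    (j : M →ₗ[R] M') [IsLocalizedModule S j] {f : N →ₗ[R] M} {f' : N' →ₗ[R] M'}
    (hcomm : f' ∘ₗ i = j ∘ₗ f) (hS : S ≤ surjectiveModuli f) :
    Function.Surjective (f'.coprod j) := by
  intro t
  obtain ⟨⟨m, s⟩, rfl⟩ := IsLocalizedModule.mk'_surjective S j t
  obtain ⟨n, y, rfl⟩ := mem_surjectiveModuli.mp (hS s.2) m
  have hf' : IsLocalizedModule.mk' j (f n) s = f' (IsLocalizedModule.mk' i n s) := by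
    rw [IsLocalizedModule.mk'_eq_iff, ← f'.map_smul_of_tower, IsLocalizedModule.mk'_cancel']
    exact (LinearMap.congr_fun hcomm n).symm
  refine ⟨(IsLocalizedModule.mk' i n s, y), ?_⟩
  calc f'.coprod j (IsLocalizedModule.mk' i n s, y)
      = IsLocalizedModule.mk' j (f n) s + IsLocalizedModule.mk' j (s • y) s := by
        rw [LinearMap.coprod_apply, hf', IsLocalizedModule.mk'_cancel]
    _ = IsLocalizedModule.mk' j (f n + s • y) s := (IsLocalizedModule.mk'_add ..).symm

theorem prime_mem_surjectiveModuli_padicInt (p : ℕ) [Fact p.Prime] :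
    (p : ℤ) ∈ surjectiveModuli (Algebra.linearMap ℤ ℤ_[p]) := by
  refine mem_surjectiveModuli.mpr fun x => ?_
  obtain ⟨y, hy⟩ : (p : ℤ_[p]) ∣ x - x.zmodRepr := by
    rw [← Ideal.mem_span_singleton, ← PadicInt.maximalIdeal_eq_span_p]
    exact x.sub_zmodRepr_mem
  exact ⟨x.zmodRepr, y, by simp [← hy]⟩

theorem surjective_smul_padicInt_of_isCoprime {p : ℕ} [Fact p.Prime] {n : ℤ}
    (h : IsCoprime (p : ℤ) n) : Function.Surjective (n • · : ℤ_[p] → ℤ_[p]) := by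
  intro x
  have hn : IsUnit (n : ℤ_[p]) := by
    rwa [PadicInt.isUnit_iff, PadicInt.norm_intCast_eq_one_iff, isCoprime_comm]
  obtain ⟨y, rfl⟩ : (n : ℤ_[p]) ∣ x := hn.dvd
  exact ⟨y, zsmul_eq_mul y n⟩

theorem prime_mem_surjectiveModuli_prodPadicInt {p : ℕ} (hp : p.Prime) :
    (p : ℤ) ∈ surjectiveModuli (Algebra.linearMap ℤ ProdPadicInt) := by
  have : Fact p.Prime := ⟨hp⟩
  have (l : {l : ℕ // l.Prime}) : Fact l.1.Prime := ⟨l.2⟩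
  refine mem_surjectiveModuli_pi (f := fun l : {l : ℕ // l.Prime} => Algebra.linearMap ℤ ℤ_[l.1])
    ⟨p, hp⟩ (prime_mem_surjectiveModuli_padicInt p) fun l hl => ?_
  have hlp : l.1 ≠ p := fun h => hl (Subtype.ext h)
  exact surjective_smul_padicInt_of_isCoprime
    (Nat.isCoprime_iff_coprime.mpr ((Nat.coprime_primes l.2 hp).mpr hlp))

theorem nonZeroDivisors_le_surjectiveModuli_prodPadicInt :
    nonZeroDivisors ℤ ≤ surjectiveModuli (Algebra.linearMap ℤ ProdPadicInt) := by
  refine nonZeroDivisors_le_surjectiveModuli fun q hq => ?_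
  obtain ⟨u, hu⟩ := (Int.associated_natAbs q).symm
  rw [← hu]
  exact mul_mem (prime_mem_surjectiveModuli_prodPadicInt (Int.prime_iff_natAbs_prime.mp hq))
    (mem_surjectiveModuli_of_isUnit _ u.isUnit)

/-- The map `ℚ × ∏_p ℤ_p → ℚ ⊗_ℤ ∏_p ℤ_p`, `(q, x) ↦ q ⊗ 1 − 1 ⊗ x`, is surjective:
every element of the tensor product is of the form `q ⊗ 1 + 1 ⊗ x`. -/
theorem hasse_square_surjective :
    Function.Surjective (fun qx : ℚ × ProdPadicInt =>
      qx.1 ⊗ₜ[ℤ] (1 : ProdPadicInt) - (1 : ℚ) ⊗ₜ[ℤ] qx.2) := by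
  intro t
  have hcomm : (TensorProduct.mk ℤ ℚ ProdPadicInt).flip 1 ∘ₗ Algebra.linearMap ℤ ℚ =
      TensorProduct.mk ℤ ℚ ProdPadicInt 1 ∘ₗ Algebra.linearMap ℤ ProdPadicInt := by
    ext
    simp
  obtain ⟨⟨q, x⟩, rfl⟩ := surjective_coprod_of_le_surjectiveModuli (nonZeroDivisors ℤ)
    (Algebra.linearMap ℤ ℚ) (TensorProduct.mk ℤ ℚ ProdPadicInt 1) hcomm
    nonZeroDivisors_le_surjectiveModuli_prodPadicInt t
  exact ⟨(q, -x), by simp [tmul_neg]⟩
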